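/- For smooth φ on {t+1 > |x|} ⊂ ℝ^{1+2}, with K = τ∂̄_τ + 2y^i∂̄_i, the conformal multiplier identity holds: −2τ(Kφ + φ)(□φ) = ∂̄_τ( (Kφ + φ)^2 + Σ_{i=1}^2 |τ ∂̄_i φ|^2 ) + Σ_{i=1}^2 ∂̄_i( −2τ(Kφ + φ)∂̄_i φ + 2τ y^i Σ_{j=1}^2 |∂̄_j φ|^2 ). -/

import Mathlib

noncomputable section

/-- Points of `ℝ^{1+2}`: `(t, x¹, x²)`. -/
abbrev Pt : Type := ℝ × ℝ × ℝ

/-- `∂_t`. -/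
def d0 (φ : Pt → ℝ) (p : Pt) : ℝ := fderiv ℝ φ p (1, 0, 0)
/-- `∂_1`. -/
def d1 (φ : Pt → ℝ) (p : Pt) : ℝ := fderiv ℝ φ p (0, 1, 0)
/-- `∂_2`. -/
def d2 (φ : Pt → ℝ) (p : Pt) : ℝ := fderiv ℝ φ p (0, 0, 1)

/-- `r = |x|`. -/
def rr (p : Pt) : ℝ := Real.sqrt (p.2.1 ^ 2 + p.2.2 ^ 2)

/-- The hyperbolic time `τ = √((t+1)² - |x|²)`. -/
def tau (p : Pt) : ℝ := Real.sqrt ((p.1 + 1) ^ 2 - (p.2.1 ^ 2 + p.2.2 ^ 2))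

/-- The hyperboloidal frame derivative `∂̄_τ = (τ/(t+1)) ∂_t`. -/
def btau (φ : Pt → ℝ) (p : Pt) : ℝ := (tau p / (p.1 + 1)) * d0 φ p

/-- The hyperboloidal frame derivative `∂̄_1 = ∂_1 + (x¹/(t+1)) ∂_t`. -/
def b1 (φ : Pt → ℝ) (p : Pt) : ℝ := d1 φ p + (p.2.1 / (p.1 + 1)) * d0 φ p

/-- The hyperboloidal frame derivative `∂̄_2 = ∂_2 + (x²/(t+1)) ∂_t`. -/
def b2 (φ : Pt → ℝ) (p : Pt) : ℝ := d2 φ p + (p.2.2 / (p.1 + 1)) * d0 φ p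

/-- The wave operator `□ = -∂_t² + Δ`. -/
def Box (φ : Pt → ℝ) (p : Pt) : ℝ := -d0 (d0 φ) p + d1 (d1 φ) p + d2 (d2 φ) p

/-- The conformal vector field `K = τ∂̄_τ + 2y^i∂̄_i` applied to `φ`. -/
def Kop (φ : Pt → ℝ) (p : Pt) : ℝ :=
  tau p * btau φ p + 2 * (p.2.1 * b1 φ p + p.2.2 * b2 φ p)

/-!
Along the frame, `∂̄_τ τ = 1`, `∂̄_i τ = 0`, and the frame fields commute. Write `M = Kφ + φ` and
`|∂̄φ|² = Σ|∂̄_iφ|²`. The definition of `K` turns the frame expression of `□` into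
`τ□φ = τ Σ∂̄_i²φ - ∂̄_τM`, so that `-2τM□φ = ∂̄_τ(M²) - Σ∂̄_i(2τM∂̄_iφ) + 2τ Σ∂̄_iφ ∂̄_iM`.
Since `[∂̄_i, K] = 2∂̄_i`, the last term is `τ(K + 6)|∂̄φ|²`, and `τ(K + 6)f` is the divergence
`∂̄_τ(τ²f) + Σ∂̄_i(2τy^i f)` for every `f`.
-/

section VectorFieldCalculus

variable {𝕜 E F : Type*} [NontriviallyNormedField 𝕜] [NormedAddCommGroup E] [NormedSpace 𝕜 E]
  [NormedAddCommGroup F] [NormedSpace 𝕜 F]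

theorem fderiv_fderiv_apply_comm {n : WithTop ℕ∞} {f : E → F} {p : E} (hf : ContDiffAt 𝕜 n f p)
    (hn : minSmoothness 𝕜 2 ≤ n) (v w : E) :
    fderiv 𝕜 (fun q => fderiv 𝕜 f q v) p w = fderiv 𝕜 (fun q => fderiv 𝕜 f q w) p v := by
  have h := VectorField.fderiv_apply_lieBracket hf hn
    (differentiableAt_const (c := v)) (differentiableAt_const (c := w))
  exact sub_eq_zero.1 (by simpa [VectorField.lieBracket] using h.symm)

theorem differentiableAt_fderiv_apply {f : E → F} {p : E} (hf : ContDiffAt 𝕜 2 f p) (v : E) :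
    DifferentiableAt 𝕜 (fun q => fderiv 𝕜 f q v) p :=
  ((hf.fderiv_right (m := 1) (by norm_num)).differentiableAt one_ne_zero).clm_apply
    (differentiableAt_const v)

/-- An operator on scalar functions is (differentiation along) a vector field. Encoded as the
existence of the field, so that the rules of calculus apply verbatim to operators such as `btau`. -/
def IsVectorField (D : (E → 𝕜) → E → 𝕜) : Prop :=
  ∃ X : E → E, ∀ f p, D f p = fderiv 𝕜 f p (X p)

namespace IsVectorField

variable {D D' : (E → 𝕜) → E → 𝕜} {f g : E → 𝕜} {p : E}

theorem add (h : IsVectorField D) (h' : IsVectorField D') :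
    IsVectorField fun f p => D f p + D' f p := by
  obtain ⟨X, hX⟩ := h
  obtain ⟨Y, hY⟩ := h'
  exact ⟨X + Y, fun f p => by simp only [hX, hY, Pi.add_apply, map_add]⟩

theorem smul (a : E → 𝕜) (h : IsVectorField D) : IsVectorField fun f p => a p * D f p := by
  obtain ⟨X, hX⟩ := h
  exact ⟨fun p => a p • X p, fun f p => by simp only [hX, map_smul, smul_eq_mul]⟩

theorem map_const (h : IsVectorField D) (c : 𝕜) (p : E) : D (fun _ => c) p = 0 := by
  obtain ⟨X, hX⟩ := h
  simp [hX]

theorem map_add (h : IsVectorField D) (hf : DifferentiableAt 𝕜 f p)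
    (hg : DifferentiableAt 𝕜 g p) : D (fun q => f q + g q) p = D f p + D g p := by
  obtain ⟨X, hX⟩ := h
  simp [hX, fderiv_fun_add hf hg]

theorem map_mul (h : IsVectorField D) (hf : DifferentiableAt 𝕜 f p)
    (hg : DifferentiableAt 𝕜 g p) : D (fun q => f q * g q) p = f p * D g p + g p * D f p := by
  obtain ⟨X, hX⟩ := h
  simp [hX, fderiv_fun_mul hf hg]

theorem map_sq (h : IsVectorField D) (hf : DifferentiableAt 𝕜 f p) :
    D (fun q => f q ^ 2) p = 2 * f p * D f p := by
  simp only [sq, h.map_mul hf hf]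
  ring

theorem map_div (h : IsVectorField D) (hf : DifferentiableAt 𝕜 f p)
    (hg : DifferentiableAt 𝕜 g p) (hg₀ : g p ≠ 0) :
    D (fun q => f q / g q) p = (D f p * g p - f p * D g p) / g p ^ 2 := by
  obtain ⟨X, hX⟩ := h
  have hinv : HasFDerivAt (fun q => (g q)⁻¹) (-(g p ^ 2)⁻¹ • fderiv 𝕜 g p) p :=
    (hasDerivAt_inv hg₀).comp_hasFDerivAt p hg.hasFDerivAt
  simp only [div_eq_mul_inv, hX]
  rw [(hf.hasFDerivAt.fun_mul hinv).fderiv]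
  simp only [add_apply, smul_apply, smul_eq_mul, neg_mul, mul_neg]
  field_simp
  ring

theorem map_sqrt {E : Type*} [NormedAddCommGroup E] [NormedSpace ℝ E] {D : (E → ℝ) → E → ℝ}
    {f : E → ℝ} {p : E} (h : IsVectorField D) (hf : DifferentiableAt ℝ f p) (hf₀ : f p ≠ 0) :
    D (fun q => √(f q)) p = D f p / (2 * √(f p)) := by
  obtain ⟨X, hX⟩ := h
  rw [hX, hX, fderiv_sqrt hf hf₀]
  simp only [one_div, mul_inv_rev, smul_apply, smul_eq_mul]
  ring

end IsVectorField

end VectorFieldCalculus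

theorem isVectorField_d0 : IsVectorField d0 := ⟨fun _ => (1, 0, 0), fun _ _ => rfl⟩

theorem isVectorField_d1 : IsVectorField d1 := ⟨fun _ => (0, 1, 0), fun _ _ => rfl⟩

theorem isVectorField_d2 : IsVectorField d2 := ⟨fun _ => (0, 0, 1), fun _ _ => rfl⟩

theorem isVectorField_btau : IsVectorField btau :=
  isVectorField_d0.smul fun p => tau p / (p.1 + 1)

theorem isVectorField_b1 : IsVectorField b1 :=
  isVectorField_d1.add (isVectorField_d0.smul fun p => p.2.1 / (p.1 + 1))

theorem isVectorField_b2 : IsVectorField b2 :=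
  isVectorField_d2.add (isVectorField_d0.smul fun p => p.2.2 / (p.1 + 1))

theorem isVectorField_Kop : IsVectorField Kop :=
  (isVectorField_btau.smul tau).add
    (((isVectorField_b1.smul fun p => p.2.1).add (isVectorField_b2.smul fun p => p.2.2)).smul
      fun _ => 2)

section HyperboloidalFrame

variable {D : (Pt → ℝ) → Pt → ℝ} {φ f : Pt → ℝ} {p : Pt}

theorem tau_pos_iff : 0 < tau p ↔ rr p < |p.1 + 1| := by
  rw [tau, rr, Real.sqrt_pos, sub_pos, ← Real.sqrt_sq_eq_abs,
    Real.sqrt_lt_sqrt_iff (by positivity)]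

theorem tau_sq (hτ : 0 < tau p) : tau p ^ 2 = (p.1 + 1) ^ 2 - (p.2.1 ^ 2 + p.2.2 ^ 2) :=
  Real.sq_sqrt (Real.sqrt_pos.1 hτ).le

theorem time_add_one_ne_zero (hτ : 0 < tau p) : p.1 + 1 ≠ 0 :=
  abs_pos.1 ((Real.sqrt_nonneg _).trans_lt (tau_pos_iff.1 hτ))

theorem differentiableAt_tau (hτ : 0 < tau p) : DifferentiableAt ℝ tau p :=
  DifferentiableAt.sqrt (by fun_prop) (Real.sqrt_pos.1 hτ).ne'

theorem IsVectorField.map_tau (h : IsVectorField D) (hτ : 0 < tau p) :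
    D tau p = ((p.1 + 1) * D (fun q => q.1) p - p.2.1 * D (fun q => q.2.1) p
      - p.2.2 * D (fun q => q.2.2) p) / tau p := by
  have hpos := Real.sqrt_pos.1 hτ
  have htau : tau = fun q : Pt => √((q.1 + 1) ^ 2 + (-1) * (q.2.1 ^ 2 + q.2.2 ^ 2)) := by
    funext q
    rw [tau, neg_one_mul, ← sub_eq_add_neg]
  conv_lhs => rw [htau]
  rw [h.map_sqrt (by fun_prop) (by linarith), ← congrFun htau p]
  simp (disch := fun_prop) only [h.map_add, h.map_mul, h.map_sq, h.map_const]
  field_simp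
  ring

theorem btau_time : btau (fun q => q.1) p = tau p / (p.1 + 1) := by
  simp [btau, d0, fderiv_fst]

theorem b1_time : b1 (fun q => q.1) p = p.2.1 / (p.1 + 1) := by
  simp [b1, d0, d1, fderiv_fst]

theorem b2_time : b2 (fun q => q.1) p = p.2.2 / (p.1 + 1) := by
  simp [b2, d0, d2, fderiv_fst]

theorem fderiv_x1 (v : Pt) : fderiv ℝ (fun q : Pt => q.2.1) p v = v.2.1 := by
  simp [fderiv.fst, fderiv_snd]

theorem fderiv_x2 (v : Pt) : fderiv ℝ (fun q : Pt => q.2.2) p v = v.2.2 := by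
  simp [fderiv.snd]

theorem btau_x1 : btau (fun q => q.2.1) p = 0 := by simp [btau, d0, fderiv_x1]

theorem btau_x2 : btau (fun q => q.2.2) p = 0 := by simp [btau, d0, fderiv_x2]

theorem b1_x1 : b1 (fun q => q.2.1) p = 1 := by simp [b1, d0, d1, fderiv_x1]

theorem b1_x2 : b1 (fun q => q.2.2) p = 0 := by simp [b1, d0, d1, fderiv_x2]

theorem b2_x1 : b2 (fun q => q.2.1) p = 0 := by simp [b2, d0, d2, fderiv_x1]

theorem b2_x2 : b2 (fun q => q.2.2) p = 1 := by simp [b2, d0, d2, fderiv_x2]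

theorem btau_tau (hτ : 0 < tau p) : btau tau p = 1 := by
  have hs := time_add_one_ne_zero hτ
  rw [isVectorField_btau.map_tau hτ, btau_time, btau_x1, btau_x2]
  field_simp
  ring

theorem b1_tau (hτ : 0 < tau p) : b1 tau p = 0 := by
  have hs := time_add_one_ne_zero hτ
  rw [isVectorField_b1.map_tau hτ, b1_time, b1_x1, b1_x2]
  field_simp
  ring

theorem b2_tau (hτ : 0 < tau p) : b2 tau p = 0 := by
  have hs := time_add_one_ne_zero hτ
  rw [isVectorField_b2.map_tau hτ, b2_time, b2_x1, b2_x2]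
  field_simp
  ring

theorem d1_d0_comm (hφ : ContDiffAt ℝ 2 φ p) : d1 (d0 φ) p = d0 (d1 φ) p :=
  fderiv_fderiv_apply_comm hφ (by simp) _ _

theorem d2_d0_comm (hφ : ContDiffAt ℝ 2 φ p) : d2 (d0 φ) p = d0 (d2 φ) p :=
  fderiv_fderiv_apply_comm hφ (by simp) _ _

theorem d2_d1_comm (hφ : ContDiffAt ℝ 2 φ p) : d2 (d1 φ) p = d1 (d2 φ) p :=
  fderiv_fderiv_apply_comm hφ (by simp) _ _

theorem differentiableAt_d0 (hφ : ContDiffAt ℝ 2 φ p) : DifferentiableAt ℝ (d0 φ) p :=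
  differentiableAt_fderiv_apply hφ _

theorem differentiableAt_d1 (hφ : ContDiffAt ℝ 2 φ p) : DifferentiableAt ℝ (d1 φ) p :=
  differentiableAt_fderiv_apply hφ _

theorem differentiableAt_d2 (hφ : ContDiffAt ℝ 2 φ p) : DifferentiableAt ℝ (d2 φ) p :=
  differentiableAt_fderiv_apply hφ _

theorem differentiableAt_div_time (hf : DifferentiableAt ℝ f p) (hs : p.1 + 1 ≠ 0) :
    DifferentiableAt ℝ (fun q => f q / (q.1 + 1)) p := by
  fun_prop (disch := assumption)

theorem differentiableAt_btau (hτ : 0 < tau p) (hφ : ContDiffAt ℝ 2 φ p) :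
    DifferentiableAt ℝ (btau φ) p :=
  (differentiableAt_div_time (differentiableAt_tau hτ) (time_add_one_ne_zero hτ)).mul
    (differentiableAt_d0 hφ)

theorem differentiableAt_b1 (hs : p.1 + 1 ≠ 0) (hφ : ContDiffAt ℝ 2 φ p) :
    DifferentiableAt ℝ (b1 φ) p :=
  (differentiableAt_d1 hφ).add
    ((differentiableAt_div_time (by fun_prop) hs).mul (differentiableAt_d0 hφ))

theorem differentiableAt_b2 (hs : p.1 + 1 ≠ 0) (hφ : ContDiffAt ℝ 2 φ p) :
    DifferentiableAt ℝ (b2 φ) p :=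
  (differentiableAt_d2 hφ).add
    ((differentiableAt_div_time (by fun_prop) hs).mul (differentiableAt_d0 hφ))

namespace IsVectorField

theorem map_div_time (h : IsVectorField D) (hf : DifferentiableAt ℝ f p) (hs : p.1 + 1 ≠ 0) :
    D (fun q => f q / (q.1 + 1)) p
      = D f p / (p.1 + 1) - f p * D (fun q => q.1) p / (p.1 + 1) ^ 2 := by
  rw [h.map_div hf (by fun_prop) hs, h.map_add (by fun_prop) (by fun_prop), h.map_const]
  field_simp
  ring

theorem map_btau (h : IsVectorField D) (hτ : 0 < tau p) (hφ : ContDiffAt ℝ 2 φ p) :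
    D (btau φ) p = tau p / (p.1 + 1) * D (d0 φ) p
      + d0 φ p * (D tau p / (p.1 + 1) - tau p * D (fun q => q.1) p / (p.1 + 1) ^ 2) := by
  have hs := time_add_one_ne_zero hτ
  have hdτ := differentiableAt_tau hτ
  rw [← h.map_div_time hdτ hs]
  exact h.map_mul (differentiableAt_div_time hdτ hs) (differentiableAt_d0 hφ)

theorem map_b1 (h : IsVectorField D) (hs : p.1 + 1 ≠ 0) (hφ : ContDiffAt ℝ 2 φ p) :
    D (b1 φ) p = D (d1 φ) p + (p.2.1 / (p.1 + 1) * D (d0 φ) p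
      + d0 φ p * (D (fun q => q.2.1) p / (p.1 + 1)
        - p.2.1 * D (fun q => q.1) p / (p.1 + 1) ^ 2)) := by
  have hx : DifferentiableAt ℝ (fun q : Pt => q.2.1 / (q.1 + 1)) p :=
    differentiableAt_div_time (by fun_prop) hs
  have hd0 := differentiableAt_d0 hφ
  rw [← h.map_div_time (by fun_prop) hs, ← h.map_mul hx hd0]
  exact h.map_add (differentiableAt_d1 hφ) (hx.fun_mul hd0)

theorem map_b2 (h : IsVectorField D) (hs : p.1 + 1 ≠ 0) (hφ : ContDiffAt ℝ 2 φ p) :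
    D (b2 φ) p = D (d2 φ) p + (p.2.2 / (p.1 + 1) * D (d0 φ) p
      + d0 φ p * (D (fun q => q.2.2) p / (p.1 + 1)
        - p.2.2 * D (fun q => q.1) p / (p.1 + 1) ^ 2)) := by
  have hx : DifferentiableAt ℝ (fun q : Pt => q.2.2 / (q.1 + 1)) p :=
    differentiableAt_div_time (by fun_prop) hs
  have hd0 := differentiableAt_d0 hφ
  rw [← h.map_div_time (by fun_prop) hs, ← h.map_mul hx hd0]
  exact h.map_add (differentiableAt_d2 hφ) (hx.fun_mul hd0)

end IsVectorField

theorem b1_btau_comm (hτ : 0 < tau p) (hφ : ContDiffAt ℝ 2 φ p) :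
    b1 (btau φ) p = btau (b1 φ) p := by
  have hs := time_add_one_ne_zero hτ
  rw [isVectorField_b1.map_btau hτ hφ, isVectorField_btau.map_b1 hs hφ, b1_tau hτ, b1_time,
    btau_x1, btau_time]
  simp only [btau, b1, d1_d0_comm hφ]
  ring

theorem b2_btau_comm (hτ : 0 < tau p) (hφ : ContDiffAt ℝ 2 φ p) :
    b2 (btau φ) p = btau (b2 φ) p := by
  have hs := time_add_one_ne_zero hτ
  rw [isVectorField_b2.map_btau hτ hφ, isVectorField_btau.map_b2 hs hφ, b2_tau hτ, b2_time,
    btau_x2, btau_time]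
  simp only [btau, b2, d2_d0_comm hφ]
  ring

theorem b2_b1_comm (hs : p.1 + 1 ≠ 0) (hφ : ContDiffAt ℝ 2 φ p) :
    b2 (b1 φ) p = b1 (b2 φ) p := by
  rw [isVectorField_b2.map_b1 hs hφ, isVectorField_b1.map_b2 hs hφ, b2_x1, b2_time, b1_x2, b1_time]
  simp only [b1, b2, d1_d0_comm hφ, d2_d0_comm hφ, d2_d1_comm hφ]
  ring

theorem Box_eq_frame (hτ : 0 < tau p) (hφ : ContDiffAt ℝ 2 φ p) :
    Box φ p = -btau (btau φ) p - 2 / tau p * (p.2.1 * btau (b1 φ) p + p.2.2 * btau (b2 φ) p)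
      + (b1 (b1 φ) p + b2 (b2 φ) p) - 2 / tau p * btau φ p := by
  have hs := time_add_one_ne_zero hτ
  rw [isVectorField_btau.map_btau hτ hφ, isVectorField_btau.map_b1 hs hφ,
    isVectorField_btau.map_b2 hs hφ, isVectorField_b1.map_b1 hs hφ, isVectorField_b2.map_b2 hs hφ,
    btau_tau hτ, btau_time, btau_x1, btau_x2, b1_time, b1_x1, b2_time, b2_x2]
  simp only [Box, btau, b1, b2, d1_d0_comm hφ, d2_d0_comm hφ]
  field_simp
  linear_combination tau p * ((p.1 + 1) * d0 (d0 φ) p - d0 φ p) * tau_sq hτ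

theorem IsVectorField.map_Kop (h : IsVectorField D) (hτ : 0 < tau p) (hφ : ContDiffAt ℝ 2 φ p) :
    D (Kop φ) p = tau p * D (btau φ) p + btau φ p * D tau p
      + 2 * (p.2.1 * D (b1 φ) p + b1 φ p * D (fun q => q.2.1) p
        + (p.2.2 * D (b2 φ) p + b2 φ p * D (fun q => q.2.2) p)) := by
  have hs := time_add_one_ne_zero hτ
  have hdτ := differentiableAt_tau hτ
  have hu := differentiableAt_btau hτ hφ
  have hv := differentiableAt_b1 hs hφ
  have hw := differentiableAt_b2 hs hφ
  have hK : Kop φ = fun q => tau q * btau φ q + 2 * (q.2.1 * b1 φ q + q.2.2 * b2 φ q) := rfl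
  rw [hK]
  simp (disch := fun_prop) only [h.map_add, h.map_mul, h.map_const]
  ring

theorem differentiableAt_Kop (hτ : 0 < tau p) (hφ : ContDiffAt ℝ 2 φ p) :
    DifferentiableAt ℝ (Kop φ) p := by
  have hs := time_add_one_ne_zero hτ
  have hdτ := differentiableAt_tau hτ
  have hu := differentiableAt_btau hτ hφ
  have hv := differentiableAt_b1 hs hφ
  have hw := differentiableAt_b2 hs hφ
  unfold Kop
  fun_prop

theorem b1_Kop (hτ : 0 < tau p) (hφ : ContDiffAt ℝ 2 φ p) :
    b1 (Kop φ) p = Kop (b1 φ) p + 2 * b1 φ p := by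
  have hs := time_add_one_ne_zero hτ
  rw [isVectorField_b1.map_Kop hτ hφ, b1_tau hτ, b1_x1, b1_x2, b1_btau_comm hτ hφ, Kop,
    b2_b1_comm hs hφ]
  ring

theorem b2_Kop (hτ : 0 < tau p) (hφ : ContDiffAt ℝ 2 φ p) :
    b2 (Kop φ) p = Kop (b2 φ) p + 2 * b2 φ p := by
  have hs := time_add_one_ne_zero hτ
  rw [isVectorField_b2.map_Kop hτ hφ, b2_tau hτ, b2_x1, b2_x2, b2_btau_comm hτ hφ, Kop,
    b2_b1_comm hs hφ]
  ring

/-- The conformal multiplier `Kφ + φ`, against which `□φ` is tested. -/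
def conformalMultiplier (φ : Pt → ℝ) (p : Pt) : ℝ := Kop φ p + φ p

/-- The sum `Σ_i |∂̄_iφ|²` over the frame directions tangent to the hyperboloids `τ = const`. -/
def tangentGradSq (φ : Pt → ℝ) (p : Pt) : ℝ := b1 φ p ^ 2 + b2 φ p ^ 2

theorem differentiableAt_conformalMultiplier (hτ : 0 < tau p) (hφ : ContDiffAt ℝ 2 φ p) :
    DifferentiableAt ℝ (conformalMultiplier φ) p :=
  (differentiableAt_Kop hτ hφ).add (hφ.differentiableAt two_ne_zero)

theorem differentiableAt_tangentGradSq (hs : p.1 + 1 ≠ 0) (hφ : ContDiffAt ℝ 2 φ p) :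
    DifferentiableAt ℝ (tangentGradSq φ) p :=
  ((differentiableAt_b1 hs hφ).pow 2).add ((differentiableAt_b2 hs hφ).pow 2)

theorem IsVectorField.map_conformalMultiplier (h : IsVectorField D) (hτ : 0 < tau p)
    (hφ : ContDiffAt ℝ 2 φ p) : D (conformalMultiplier φ) p = D (Kop φ) p + D φ p :=
  h.map_add (differentiableAt_Kop hτ hφ) (hφ.differentiableAt two_ne_zero)

theorem IsVectorField.map_tangentGradSq (h : IsVectorField D) (hs : p.1 + 1 ≠ 0)
    (hφ : ContDiffAt ℝ 2 φ p) :
    D (tangentGradSq φ) p = 2 * b1 φ p * D (b1 φ) p + 2 * b2 φ p * D (b2 φ) p := by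
  have hv := differentiableAt_b1 hs hφ
  have hw := differentiableAt_b2 hs hφ
  rw [← h.map_sq hv, ← h.map_sq hw]
  exact h.map_add (hv.fun_pow 2) (hw.fun_pow 2)

theorem tau_mul_Box (hτ : 0 < tau p) (hφ : ContDiffAt ℝ 2 φ p) :
    tau p * Box φ p = tau p * (b1 (b1 φ) p + b2 (b2 φ) p) - btau (conformalMultiplier φ) p := by
  rw [Box_eq_frame hτ hφ, isVectorField_btau.map_conformalMultiplier hτ hφ,
    isVectorField_btau.map_Kop hτ hφ, btau_tau hτ, btau_x1, btau_x2]
  field_simp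
  ring

theorem frame_div_scaling_eq (hτ : 0 < tau p) (hf : DifferentiableAt ℝ f p) :
    btau (fun q => tau q ^ 2 * f q) p + b1 (fun q => 2 * tau q * q.2.1 * f q) p
        + b2 (fun q => 2 * tau q * q.2.2 * f q) p
      = tau p * (Kop f p + 6 * f p) := by
  have hdτ := differentiableAt_tau hτ
  simp (disch := fun_prop) only [isVectorField_btau.map_mul, isVectorField_btau.map_sq,
    isVectorField_b1.map_mul, isVectorField_b1.map_const, isVectorField_b2.map_mul,
    isVectorField_b2.map_const, btau_tau hτ, b1_tau hτ, b2_tau hτ, b1_x1, b2_x2, Kop]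
  ring

theorem two_mul_tau_mul_inner_grad_conformalMultiplier (hτ : 0 < tau p) (hφ : ContDiffAt ℝ 2 φ p) :
    2 * tau p * (b1 φ p * b1 (conformalMultiplier φ) p + b2 φ p * b2 (conformalMultiplier φ) p)
      = btau (fun q => tau q ^ 2 * tangentGradSq φ q) p
        + b1 (fun q => 2 * tau q * q.2.1 * tangentGradSq φ q) p
        + b2 (fun q => 2 * tau q * q.2.2 * tangentGradSq φ q) p := by
  have hs := time_add_one_ne_zero hτ
  rw [frame_div_scaling_eq hτ (differentiableAt_tangentGradSq hs hφ),
    isVectorField_Kop.map_tangentGradSq hs hφ, isVectorField_b1.map_conformalMultiplier hτ hφ,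
    isVectorField_b2.map_conformalMultiplier hτ hφ, b1_Kop hτ hφ, b2_Kop hτ hφ, tangentGradSq]
  ring

theorem btau_energy (hτ : 0 < tau p) (hφ : ContDiffAt ℝ 2 φ p) :
    btau (fun q => conformalMultiplier φ q ^ 2 + (tau q * b1 φ q) ^ 2 + (tau q * b2 φ q) ^ 2) p
      = 2 * conformalMultiplier φ p * btau (conformalMultiplier φ) p
        + btau (fun q => tau q ^ 2 * tangentGradSq φ q) p := by
  have hM := differentiableAt_conformalMultiplier hτ hφ
  have hG := differentiableAt_tangentGradSq (time_add_one_ne_zero hτ) hφ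
  have hdτ := differentiableAt_tau hτ
  rw [← isVectorField_btau.map_sq hM, ← isVectorField_btau.map_add (by fun_prop) (by fun_prop)]
  congr 1
  funext q
  rw [tangentGradSq]
  ring

theorem IsVectorField.map_neg_two_mul_tau_mul_mul_add {g k : Pt → ℝ} (h : IsVectorField D)
    (hDτ : D tau p = 0) (hτ : 0 < tau p) (hf : DifferentiableAt ℝ f p)
    (hg : DifferentiableAt ℝ g p) (hk : DifferentiableAt ℝ k p) :
    D (fun q => -2 * tau q * f q * g q + k q) p
      = -2 * tau p * (f p * D g p + g p * D f p) + D k p := by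
  have hdτ := differentiableAt_tau hτ
  simp (disch := fun_prop) only [h.map_add, h.map_mul, h.map_const, hDτ]
  ring

theorem conformal_multiplier_identity_general (hφ : ContDiffAt ℝ 2 φ p)
    (hp : rr p < |p.1 + 1|) :
    -2 * tau p * (Kop φ p + φ p) * Box φ p
      = btau (fun q => (Kop φ q + φ q) ^ 2
            + (tau q * b1 φ q) ^ 2 + (tau q * b2 φ q) ^ 2) p
        + b1 (fun q => -2 * tau q * (Kop φ q + φ q) * b1 φ q
            + 2 * tau q * q.2.1 * ((b1 φ q) ^ 2 + (b2 φ q) ^ 2)) p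
        + b2 (fun q => -2 * tau q * (Kop φ q + φ q) * b2 φ q
            + 2 * tau q * q.2.2 * ((b1 φ q) ^ 2 + (b2 φ q) ^ 2)) p := by
  have hτ := tau_pos_iff.2 hp
  have hs := time_add_one_ne_zero hτ
  have hdτ := differentiableAt_tau hτ
  have hM := differentiableAt_conformalMultiplier hτ hφ
  have hG := differentiableAt_tangentGradSq hs hφ
  change -2 * tau p * conformalMultiplier φ p * Box φ p
    = btau (fun q => conformalMultiplier φ q ^ 2 + (tau q * b1 φ q) ^ 2 + (tau q * b2 φ q) ^ 2) p
      + b1 (fun q => -2 * tau q * conformalMultiplier φ q * b1 φ q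
          + 2 * tau q * q.2.1 * tangentGradSq φ q) p
      + b2 (fun q => -2 * tau q * conformalMultiplier φ q * b2 φ q
          + 2 * tau q * q.2.2 * tangentGradSq φ q) p
  rw [btau_energy hτ hφ,
    isVectorField_b1.map_neg_two_mul_tau_mul_mul_add (b1_tau hτ) hτ hM
      (differentiableAt_b1 hs hφ) (by fun_prop),
    isVectorField_b2.map_neg_two_mul_tau_mul_mul_add (b2_tau hτ) hτ hM
      (differentiableAt_b2 hs hφ) (by fun_prop)]
  linear_combination -2 * conformalMultiplier φ p * tau_mul_Box hτ hφ
    + two_mul_tau_mul_inner_grad_conformalMultiplier hτ hφ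

end HyperboloidalFrame

/-- the conformal multiplier identity
`-2τ(Kφ+φ)(□φ) = ∂̄_τ((Kφ+φ)² + Σ|τ∂̄_iφ|²) + Σ_i ∂̄_i(-2τ(Kφ+φ)∂̄_iφ + 2τy^iΣ_j|∂̄_jφ|²)`. -/
theorem conformal_multiplier_identity (φ : Pt → ℝ) (hφ : ContDiff ℝ (⊤ : ℕ∞) φ)
    (p : Pt) (hp : rr p < p.1 + 1) :
    -2 * tau p * (Kop φ p + φ p) * Box φ p
      = btau (fun q => (Kop φ q + φ q) ^ 2
            + (tau q * b1 φ q) ^ 2 + (tau q * b2 φ q) ^ 2) p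
        + b1 (fun q => -2 * tau q * (Kop φ q + φ q) * b1 φ q
            + 2 * tau q * q.2.1 * ((b1 φ q) ^ 2 + (b2 φ q) ^ 2)) p
        + b2 (fun q => -2 * tau q * (Kop φ q + φ q) * b2 φ q
            + 2 * tau q * q.2.2 * ((b1 φ q) ^ 2 + (b2 φ q) ^ 2)) p := by
  exact conformal_multiplier_identity_general (hφ.contDiffAt.of_le (by norm_cast))
    (hp.trans_le (le_abs_self _))
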